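/- Let n ≥ 3. Suppose u ∈ C²(𝔹ⁿ,ℝⁿ) ∩ C(cl 𝔹ⁿ,ℝⁿ) satisfies u = P_h[φ] − G_h[ψ] on 𝔹ⁿ, where φ : 𝕊ⁿ⁻¹ → ℝⁿ satisfies |φ(ξ)−φ(η)| ≤ L|ξ−η| for all ξ,η ∈ 𝕊ⁿ⁻¹ (L ≥ 0 a constant), and ψ ∈ C(𝔹ⁿ,ℝⁿ) satisfies |ψ(x)| ≤ M(1−|x|²) for all x ∈ 𝔹ⁿ (M ≥ 0 a constant). Then there exists a constant C₁ ≥ 0 depending only on n, L and M such that for all x, y ∈ 𝔹ⁿ one has (ℓ(Du(0)) − 2C₁)·|x−y| ≤ |u(x)−u(y)| ≤ C₁·|x−y|, where Du(0) is the Jacobian matrix of u at the origin and ℓ(A) = inf{ |Aζ| : ζ ∈ ℝⁿ, |ζ| = 1 }. -/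

import Mathlib

/-!
The lower bound follows from the upper one: if `u` is Lipschitz with constant `C₁` on the ball, then
`ℓ(Du(0)) ≤ ‖Du(0)‖ ≤ C₁`, so `ℓ(Du(0)) - 2 C₁ ≤ 0`. What has to be shown is that `P_h[φ]` and
`G_h[ψ]` are Lipschitz, with constants `C(n) L` and `C(n) M`. By convexity (`lipschitz_of_local`) it
suffices to compare points `x`, `x'` with `|x - x'| ≤ ρ / 20`, where `ρ = 1 - |x|`; at this scale
finite differences of the kernels obey the same bounds as their gradients. Write `n = m + 2`, so
that `m ≥ 1`.

For the Poisson part, the difference of the kernels at `x` and `x'` is at most a constant times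
`|x - x'| ρ^m / |ξ - x|^(2m+2)` (`abs_Ph_sub_le`). As the kernel has total mass one, the value of `φ`
at the radial projection of `x` can be subtracted, and the integrand becomes
`|x - x'| L ρ^m / |ξ - x|^(2m+1)`. The integral of `|ξ - x|^-(2m+1)` over the sphere is `O(ρ^-m)`
(`lintegral_pow_sphere_le`): this power is dominated by the integral of `|ξ - z|^-(2m+2)` over the
points `z` of the ray through `x`, and for fixed `z` that power is a multiple of the Poisson kernel.
Here `m ≥ 1` makes the resulting `∫ s^-(m+1) ds` over `s > ρ` equal to `O(ρ^-m)`, without a logarithm.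

That the Poisson–Szegő kernel has total mass one (`Ph_lintegral`) is obtained from the action of
Lorentz boosts on the light cone. Identified with `ℝⁿ`, a boost is a bijection with explicit
Jacobian which maps rays to rays; computing the volume of the preimage of the unit ball in polar
coordinates gives the integral of the kernel.

For the Green part, `|φ_x(y)| = d / q` with `d = |x - y|` and `q² = d² + (1 - |x|²)(1 - |y|²)`. The
mean value inequality for `g` and a finite difference bound for `d / q` (`abs_ratio_sub_le`)
show, after all powers of `1 - |y|²` have cancelled, that the difference of the integrands with
respect to `ν` is at most a constant times `M |x - x'|` times the sum of
`ρ^m / (max(ρ, d)^(m+1) d^(m+1))` and the same expression at `x'` (`Gh_diff_le`). In polar coordinates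
around `x` this majorant has integral at most `2 n`.
-/


open MeasureTheory Metric Set

noncomputable section

/-- The open unit ball setting: Euclidean n-space. -/
abbrev En (n : ℕ) := EuclideanSpace ℝ (Fin n)

/-- Lebesgue volume measure normalized so that the unit ball has measure 1. -/
def nuMeasure (n : ℕ) : Measure (En n) :=
  (volume (ball (0 : En n) 1))⁻¹ • (volume : Measure (En n))

/-- The Möbius invariant measure `dτ(x) = dν(x)/(1-|x|²)ⁿ`. -/
def tauMeasure (n : ℕ) : Measure (En n) :=
  (nuMeasure n).withDensity fun x => ENNReal.ofReal ((1 - ‖x‖ ^ 2) ^ n)⁻¹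

/-- The surface measure on the unit sphere, normalized so that the sphere has measure 1. -/
def sigmaMeasure (n : ℕ) : Measure (sphere (0 : En n) 1) :=
  ((volume : Measure (En n)).toSphere univ)⁻¹ • (volume : Measure (En n)).toSphere

/-- `[a,x]` via the identity `[a,x]² = |x-a|² + (1-|x|²)(1-|a|²)`. -/
def qbracket {n : ℕ} (a x : En n) : ℝ :=
  Real.sqrt (‖x - a‖ ^ 2 + (1 - ‖x‖ ^ 2) * (1 - ‖a‖ ^ 2))

/-- The Möbius transformation `φ_a` of the unit ball with `φ_a(a) = 0`, `φ_a(0) = a`. -/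
def mobius {n : ℕ} (a x : En n) : En n :=
  (qbracket a x ^ 2)⁻¹ • (‖x - a‖ ^ 2 • a - (1 - ‖a‖ ^ 2) • (x - a))

/-- `g(r) = (1/n) ∫_r^1 (1-s²)^{n-2} s^{-(n-1)} ds`. -/
def gfun (n : ℕ) (r : ℝ) : ℝ :=
  (1 / (n : ℝ)) * ∫ s in r..(1 : ℝ), (1 - s ^ 2) ^ (n - 2) / s ^ (n - 1)

/-- The hyperbolic Green function `G_h(x,y) = g(|φ_x(y)|)`. -/
def Gh (n : ℕ) (x y : En n) : ℝ := gfun n ‖mobius x y‖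

/-- The Green integral `G_h[ψ](x) = ∫_{𝔹ⁿ} G_h(x,y) ψ(y) dτ(y)`. -/
def GhInt (n : ℕ) (ψ : En n → En n) (x : En n) : En n :=
  ∫ y in ball (0 : En n) 1, Gh n x y • ψ y ∂(tauMeasure n)

/-- The Poisson–Szegő kernel `P_h(x,ξ) = ((1-|x|²)/|ξ-x|²)^{n-1}`. -/
def Ph (n : ℕ) (x : En n) (ξ : sphere (0 : En n) 1) : ℝ :=
  ((1 - ‖x‖ ^ 2) / ‖(ξ : En n) - x‖ ^ 2) ^ (n - 1)

/-- The Poisson integral `P_h[φ](x) = ∫_{𝕊ⁿ⁻¹} P_h(x,ξ) φ(ξ) dσ(ξ)`. -/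
def PhInt (n : ℕ) (φ : En n → En n) (x : En n) : En n :=
  ∫ ξ, Ph n x ξ • φ (ξ : En n) ∂(sigmaMeasure n)

/-- The `i`-th standard basis vector. -/
def basisE (n : ℕ) (i : Fin n) : En n := EuclideanSpace.single i 1

/-- The Euclidean Laplacian of a vector-valued function. -/
def lap {n : ℕ} (u : En n → En n) (x : En n) : En n :=
  ∑ i : Fin n, fderiv ℝ (fun y => fderiv ℝ u y (basisE n i)) x (basisE n i)

/-- The hyperbolic Laplacian
`Δ_h u(x) = (1-|x|²)² Δu(x) + 2(n-2)(1-|x|²) Σᵢ xᵢ ∂u/∂xᵢ(x)`. -/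
def hypLap (n : ℕ) (u : En n → En n) (x : En n) : En n :=
  (1 - ‖x‖ ^ 2) ^ 2 • lap u x
    + (2 * ((n : ℝ) - 2) * (1 - ‖x‖ ^ 2)) • ∑ i : Fin n, x i • fderiv ℝ u x (basisE n i)

/-- Pochhammer symbol `(a)_k`. -/
def poch (a : ℝ) (k : ℕ) : ℝ := (ascPochhammer ℝ k).eval a

/-- Gauss hypergeometric series `F(a,b;c;s)`. -/
def hyperF (a b c s : ℝ) : ℝ :=
  ∑' k : ℕ, poch a k * poch b k / ((k.factorial : ℝ) * poch c k) * s ^ k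

/-- A majorant: continuous, increasing, `ω(0)=0`, with `ω(t)/t` non-increasing. -/
def IsMajorant (ω : ℝ → ℝ) : Prop :=
  ContinuousOn ω (Ici 0) ∧ MonotoneOn ω (Ici 0) ∧ ω 0 = 0 ∧
    (∀ x ∈ Ici (0:ℝ), 0 ≤ ω x) ∧
    ∀ s t : ℝ, 0 < s → s ≤ t → ω t / t ≤ ω s / s

/-- A fast majorant: `∫₀^ρ ω(t)/t dt ≤ C ω(ρ)` for small `ρ`. -/
def IsFastMajorant (ω : ℝ → ℝ) : Prop :=
  IsMajorant ω ∧ ∃ ρ₀ > (0:ℝ), ∃ C : ℝ,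
    ∀ ρ : ℝ, 0 < ρ → ρ < ρ₀ → (∫ t in (0:ℝ)..ρ, ω t / t) ≤ C * ω ρ

end

/-! ### Total mass of the Poisson–Szegő kernel -/

/-- Polar coordinates for the lower Lebesgue integral on `En n`. -/
theorem lintegral_polar {n : ℕ} (hn : 1 ≤ n) {h : En n → ENNReal} (hm : Measurable h) :
    ∫⁻ y, h y = ∫⁻ ξ : sphere (0 : En n) 1,
      (∫⁻ r in Ioi (0 : ℝ), ENNReal.ofReal (r ^ (n - 1)) * h (r • (ξ : En n)))
        ∂((volume : Measure (En n)).toSphere) := by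
  have : Nonempty (Fin n) := ⟨⟨0, hn⟩⟩
  have hmp := (volume : Measure (En n)).measurePreserving_homeomorphUnitSphereProd
  have h1 := hmp.lintegral_comp_emb (Homeomorph.measurableEmbedding _)
    (fun p => h ((p.2 : ℝ) • (p.1 : En n)))
  have h2 : ∫⁻ y, h y = ∫⁻ y : ({0}ᶜ : Set (En n)), h y ∂(Measure.comap Subtype.val volume) := by
    rw [lintegral_subtype_comap (measurableSet_singleton _).compl, restrict_compl_singleton]
  have h3 : ∀ y : ({0}ᶜ : Set (En n)),
      h (((homeomorphUnitSphereProd (En n) y).2 : ℝ) •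
        ((homeomorphUnitSphereProd (En n) y).1 : En n)) = h y := by
    intro y
    have hy : ‖(y : En n)‖ ≠ 0 := norm_ne_zero_iff.2 y.2
    simp [smul_smul, mul_inv_cancel₀ hy]
  rw [h2, ← lintegral_congr h3, h1, lintegral_prod]
  · refine lintegral_congr fun ξ => ?_
    rw [Measure.volumeIoiPow, lintegral_withDensity_eq_lintegral_mul _ (by fun_prop)
      (by fun_prop)]
    simp only [finrank_euclideanSpace, Fintype.card_fin, Pi.mul_apply]
    rw [lintegral_subtype_comap measurableSet_Ioi
      (fun r : ℝ => ENNReal.ofReal (r ^ (n - 1)) * h (r • (ξ : En n)))]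
  · fun_prop

/-- The action on `En n` of the Lorentz boost with momentum `w`, where the future light cone
`{(y, t) : t = ‖y‖}` is identified with `En n` by its space component. -/
noncomputable def boost {n : ℕ} (w y : En n) : En n :=
  y + (inner ℝ w y / (√(1 + ‖w‖ ^ 2) + 1) - ‖y‖) • w

/-- The norm of `boost w y` is the time component of the boosted light-like vector `(y, ‖y‖)`. -/
theorem norm_boost {n : ℕ} (w y : En n) :
    ‖boost w y‖ = √(1 + ‖w‖ ^ 2) * ‖y‖ - inner ℝ w y := by
  have hg : √(1 + ‖w‖ ^ 2) ^ 2 = 1 + ‖w‖ ^ 2 := Real.sq_sqrt (by positivity)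
  have hp : inner ℝ w y ≤ ‖w‖ * ‖y‖ := real_inner_le_norm w y
  have hw : ‖w‖ ≤ √(1 + ‖w‖ ^ 2) := Real.le_sqrt_of_sq_le (by linarith)
  unfold boost
  set γ := √(1 + ‖w‖ ^ 2) with hγ
  have hγ0 : 0 ≤ γ := Real.sqrt_nonneg _
  have hpos : 0 ≤ γ * ‖y‖ - inner ℝ w y := by nlinarith [norm_nonneg y]
  rw [← sq_eq_sq₀ (norm_nonneg _) hpos, norm_add_sq_real, norm_smul, inner_smul_right, mul_pow,
    Real.norm_eq_abs, sq_abs, real_inner_comm w y, show ‖w‖ ^ 2 = γ ^ 2 - 1 by linarith]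
  have : γ + 1 ≠ 0 := by positivity
  field_simp
  ring

theorem boost_neg_boost {n : ℕ} (w y : En n) : boost (-w) (boost w y) = y := by
  have hg : √(1 + ‖w‖ ^ 2) ^ 2 = 1 + ‖w‖ ^ 2 := Real.sq_sqrt (by positivity)
  have hγ0 : 0 ≤ √(1 + ‖w‖ ^ 2) := Real.sqrt_nonneg _
  rw [boost, norm_boost, norm_neg]
  set γ := √(1 + ‖w‖ ^ 2) with hγ
  have h1 : inner ℝ (-w) (boost w y)
      = -(inner ℝ w y + (inner ℝ w y / (γ + 1) - ‖y‖) * (γ ^ 2 - 1)) := by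
    rw [boost, inner_neg_left, inner_add_right, inner_smul_right, real_inner_self_eq_norm_sq,
      ← hγ, hg]
    ring
  rw [h1, boost, ← hγ, smul_neg, add_assoc, ← sub_eq_add_neg, ← sub_smul]
  have : γ + 1 ≠ 0 := by positivity
  rw [show inner ℝ w y / (γ + 1) - ‖y‖ - (-(inner ℝ w y +
    (inner ℝ w y / (γ + 1) - ‖y‖) * (γ ^ 2 - 1)) / (γ + 1) - (γ * ‖y‖ - inner ℝ w y)) = 0 by
      field_simp; ring]
  simp

theorem boost_zero {n : ℕ} (w : En n) : boost w 0 = 0 := by simp [boost]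

theorem boost_image {n : ℕ} (w : En n) : boost w '' {0}ᶜ = {0}ᶜ := by
  ext z
  constructor
  · rintro ⟨y, hy, rfl⟩ hz
    apply hy
    have := boost_neg_boost w y
    rw [mem_singleton_iff.1 hz, boost_zero] at this
    exact this.symm
  · intro hz
    refine ⟨boost (-w) z, fun h => hz ?_, by simpa using boost_neg_boost (-w) z⟩
    have := boost_neg_boost (-w) z
    rw [mem_singleton_iff.1 h, boost_zero] at this
    exact this.symm

/-- The derivative of the boost away from the origin; it is a rank one perturbation of the
identity. -/
noncomputable def boostDeriv {n : ℕ} (w y : En n) : En n →L[ℝ] En n :=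
  ContinuousLinearMap.id ℝ _ +
    ((√(1 + ‖w‖ ^ 2) + 1)⁻¹ • innerSL ℝ w - ‖y‖⁻¹ • innerSL ℝ y).smulRight w

theorem hasFDerivAt_boost {n : ℕ} (w : En n) {y : En n} (hy : y ≠ 0) :
    HasFDerivAt (boost w) (boostDeriv w y) y := by
  have hy' : ‖y‖ ≠ 0 := by simpa using hy
  have hnorm : HasFDerivAt (fun z : En n => ‖z‖) (‖y‖⁻¹ • innerSL ℝ y) y := by
    have h := ((hasFDerivAt_id y).norm_sq).sqrt (by simpa using hy)
    have he : (fun z : En n => √(‖id z‖ ^ 2)) = fun z => ‖z‖ := by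
      ext z; simp
    rw [he] at h
    refine h.congr_fderiv ?_
    ext z
    simp
    ring
  have h1 : HasFDerivAt (fun z : En n => inner ℝ w z / (√(1 + ‖w‖ ^ 2) + 1))
      ((√(1 + ‖w‖ ^ 2) + 1)⁻¹ • innerSL ℝ w) y := by
    have := ((innerSL ℝ w).hasFDerivAt (x := y)).const_mul ((√(1 + ‖w‖ ^ 2) + 1)⁻¹)
    simpa [div_eq_inv_mul] using this
  exact (hasFDerivAt_id y).add ((h1.sub hnorm).smul_const w)

theorem det_boostDeriv {n : ℕ} (w y : En n) :
    (boostDeriv w y).det = √(1 + ‖w‖ ^ 2) - inner ℝ w y / ‖y‖ := by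
  have hg : √(1 + ‖w‖ ^ 2) ^ 2 = 1 + ‖w‖ ^ 2 := Real.sq_sqrt (by positivity)
  have hγ0 : 0 ≤ √(1 + ‖w‖ ^ 2) := Real.sqrt_nonneg _
  have h1 : (boostDeriv w y : En n →ₗ[ℝ] En n) = LinearMap.transvection
      (((√(1 + ‖w‖ ^ 2) + 1)⁻¹ • innerSL ℝ w - ‖y‖⁻¹ • innerSL ℝ y :
        En n →L[ℝ] ℝ) : Module.Dual ℝ (En n)) w := by
    ext z
    simp [boostDeriv, LinearMap.transvection]
  rw [ContinuousLinearMap.det, h1, LinearMap.transvection.det]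
  set γ := √(1 + ‖w‖ ^ 2)
  have : γ + 1 ≠ 0 := by positivity
  simp only [ContinuousLinearMap.coe_coe, sub_apply, FunLike.coe_smul, Pi.smul_apply,
    innerSL_apply_apply, smul_eq_mul, real_inner_self_eq_norm_sq, real_inner_comm w y,
    show ‖w‖ ^ 2 = γ ^ 2 - 1 by linarith]
  rw [show γ ^ 2 - 1 = (γ + 1) * (γ - 1) by ring, inv_mul_cancel_left₀ this]
  ring

theorem lintegral_cut {n : ℕ} (hn : 1 ≤ n) {k : ℝ} (hk : 0 < k) :
    ∫⁻ r in Ioi (0 : ℝ), ENNReal.ofReal (r ^ (n - 1)) *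
      (ENNReal.ofReal k * (Iio k⁻¹).indicator 1 r) = ENNReal.ofReal (k⁻¹ ^ (n - 1) / n) := by
  have h0 : ∀ r : ℝ, ENNReal.ofReal (r ^ (n - 1)) * (ENNReal.ofReal k * (Iio k⁻¹).indicator 1 r)
      = (Iio k⁻¹).indicator (fun r => ENNReal.ofReal k * ENNReal.ofReal (r ^ (n - 1))) r := by
    intro r
    by_cases h : r ∈ Iio k⁻¹
    · simp only [indicator_of_mem h, Pi.one_apply, mul_one]; ring
    · simp only [indicator_of_notMem h, mul_zero]
  simp_rw [h0]
  have hk' : 0 ≤ k⁻¹ := by positivity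
  rw [lintegral_indicator measurableSet_Iio, Measure.restrict_restrict measurableSet_Iio,
    inter_comm, Ioi_inter_Iio, Measure.restrict_congr_set Ioo_ae_eq_Ioc,
    lintegral_const_mul' _ _ ENNReal.ofReal_ne_top,
    ← ofReal_integral_eq_lintegral_ofReal (intervalIntegral.intervalIntegrable_pow _).1,
    ← intervalIntegral.integral_of_le hk', ← ENNReal.ofReal_mul hk.le]
  · obtain ⟨m, rfl⟩ : ∃ m, n = m + 1 := ⟨n - 1, by omega⟩
    congr 1
    simp [pow_succ]
    field_simp
  · filter_upwards [ae_restrict_mem measurableSet_Ioc] with y hy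
    exact pow_nonneg hy.1.le _

/-- The total mass of the Poisson kernel, written with the momentum `w` instead of the point of the
ball: apply the change of variables `boost w` to the volume of the unit ball and integrate in polar
coordinates. Its Jacobian `γ - ⟪w, ξ⟫` is also the factor by which it stretches the ray through
`ξ`, which leaves the power `-(n - 1)` of this factor. -/
theorem lintegral_boost {n : ℕ} (hn : 1 ≤ n) (w : En n) :
    ∫⁻ ξ, ENNReal.ofReal ((√(1 + ‖w‖ ^ 2) - inner ℝ w (ξ : En n))⁻¹ ^ (n - 1))
      ∂(sigmaMeasure n) = 1 := by
  have : Nonempty (Fin n) := ⟨⟨0, hn⟩⟩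
  set γ := √(1 + ‖w‖ ^ 2) with hγ
  have hw : ‖w‖ < γ := Real.lt_sqrt_of_sq_lt (by linarith)
  have hkpos : ∀ y : En n, y ≠ 0 → 0 < γ - inner ℝ w y / ‖y‖ := by
    intro y hy
    have hy : 0 < ‖y‖ := norm_pos_iff.2 hy
    have : inner ℝ w y / ‖y‖ ≤ ‖w‖ := by
      rw [div_le_iff₀ hy]; exact real_inner_le_norm w y
    linarith
  have hbm : Measurable (boost w) := by unfold boost; fun_prop
  have hb : MeasurableSet (boost w ⁻¹' ball 0 1) := hbm measurableSet_ball
  set h : En n → ENNReal := fun y =>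
    ENNReal.ofReal (γ - inner ℝ w y / ‖y‖) * (boost w ⁻¹' ball 0 1).indicator 1 y with hh
  have hm : Measurable h := by
    refine Measurable.mul (by fun_prop) (measurable_one.indicator hb)
  have h1 : volume (ball (0 : En n) 1) = ∫⁻ y, h y := by
    have := lintegral_image_eq_lintegral_abs_det_fderiv_mul volume
      (measurableSet_singleton (0 : En n)).compl
      (fun y hy => (hasFDerivAt_boost w hy).hasFDerivWithinAt)
      ((fun y _ z _ hyz => by
        rw [← boost_neg_boost w y, hyz, boost_neg_boost]) : InjOn (boost w) {0}ᶜ)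
      ((ball (0 : En n) 1).indicator 1)
    rw [boost_image, restrict_compl_singleton, lintegral_indicator_one measurableSet_ball] at this
    rw [this, ← restrict_compl_singleton (μ := volume) (0 : En n)]
    refine setLIntegral_congr_fun (measurableSet_singleton (0 : En n)).compl fun y hy => ?_
    simp only [hh]
    rw [det_boostDeriv, abs_of_pos (hkpos y hy)]
    rfl
  have h2 : ∀ ξ : sphere (0 : En n) 1,
      ∫⁻ r in Ioi (0 : ℝ), ENNReal.ofReal (r ^ (n - 1)) * h (r • (ξ : En n))
        = ENNReal.ofReal ((γ - inner ℝ w (ξ : En n))⁻¹ ^ (n - 1)) * (n : ENNReal)⁻¹ := by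
    intro ξ
    have hξ : ‖(ξ : En n)‖ = 1 := by simp
    have hk : 0 < γ - inner ℝ w (ξ : En n) := by
      simpa [hξ] using hkpos ξ (by rw [← norm_pos_iff, hξ]; norm_num)
    rw [← ENNReal.ofReal_natCast, ← ENNReal.ofReal_inv_of_pos (by exact_mod_cast hn),
      ← ENNReal.ofReal_mul (by positivity), ← div_eq_mul_inv, ← lintegral_cut hn hk]
    refine setLIntegral_congr_fun measurableSet_Ioi fun r hr => ?_
    have hr : 0 < r := hr
    simp only [hh]
    congr 2
    · rw [inner_smul_right, norm_smul, hξ, Real.norm_eq_abs, abs_of_pos hr]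
      field_simp
    · have : r • (ξ : En n) ∈ boost w ⁻¹' ball 0 1 ↔ r ∈ Iio (γ - inner ℝ w (ξ : En n))⁻¹ := by
        rw [mem_preimage, mem_ball_zero_iff, norm_boost, inner_smul_right, norm_smul, hξ,
          Real.norm_eq_abs, abs_of_pos hr, mem_Iio, lt_inv_comm₀ hr hk, ← hγ, ← one_div,
          lt_div_iff₀ hr]
        constructor <;> intro h <;> linarith
      by_cases hc : r ∈ Iio (γ - inner ℝ w (ξ : En n))⁻¹
      · rw [indicator_of_mem hc, indicator_of_mem (this.2 hc)]; rfl
      · rw [indicator_of_notMem hc, indicator_of_notMem (fun h => hc (this.1 h))]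
  rw [lintegral_polar hn hm, lintegral_congr h2, lintegral_mul_const' _ _
    (ENNReal.inv_ne_top.2 (Nat.cast_ne_zero.2 (by omega)))] at h1
  rw [sigmaMeasure, lintegral_smul_measure, Measure.toSphere_apply_univ, h1, finrank_euclideanSpace,
    Fintype.card_fin, smul_eq_mul]
  have hV0 : volume (ball (0 : En n) 1) ≠ 0 := (measure_ball_pos _ _ one_pos).ne'
  have hVt : volume (ball (0 : En n) 1) ≠ ⊤ := measure_ball_lt_top.ne
  have hn0 : (n : ENNReal) ≠ 0 := Nat.cast_ne_zero.2 (by omega)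
  rw [h1] at hV0 hVt
  generalize ∫⁻ ξ, ENNReal.ofReal ((γ - inner ℝ w (ξ : En n))⁻¹ ^ (n - 1))
    ∂((volume : Measure (En n)).toSphere) = J at *
  have hJ : (n : ENNReal) * (J * (n : ENNReal)⁻¹) = J := by
    rw [mul_comm J, ← mul_assoc, ENNReal.mul_inv_cancel hn0 (by simp), one_mul]
  rw [hJ]
  refine ENNReal.inv_mul_cancel (fun h => hV0 (by simp [h])) (fun h => hVt ?_)
  rw [h, ENNReal.top_mul]
  simp

/-- The Poisson–Szegő kernel has total mass one: with `w = 2 x / (1 - |x|²)`, its base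
`(1 - |x|²) / |ξ - x|²` is `(√(1 + |w|²) - ⟪w, ξ⟫)⁻¹`. -/
theorem Ph_lintegral {n : ℕ} (hn : 1 ≤ n) {x : En n} (hx : ‖x‖ < 1) :
    ∫⁻ ξ, ENNReal.ofReal (Ph n x ξ) ∂(sigmaMeasure n) = 1 := by
  have hA : 0 < 1 - ‖x‖ ^ 2 := by nlinarith [norm_nonneg x]
  rw [← lintegral_boost hn ((2 / (1 - ‖x‖ ^ 2)) • x)]
  refine lintegral_congr fun ξ => ?_
  have hξ : ‖(ξ : En n)‖ = 1 := by simp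
  have hs : √(1 + ‖(2 / (1 - ‖x‖ ^ 2)) • x‖ ^ 2) = (1 + ‖x‖ ^ 2) / (1 - ‖x‖ ^ 2) := by
    rw [Real.sqrt_eq_iff_eq_sq (by positivity) (by positivity), norm_smul, mul_pow,
      Real.norm_eq_abs, sq_abs]
    field_simp
    ring
  rw [Ph, hs, norm_sub_sq_real, hξ, inner_smul_left, real_inner_comm]
  congr 2
  rw [← inv_div]
  congr 1
  simp
  field_simp
  ring

/-! ### Integrals of powers of the distance over the sphere -/

theorem lintegral_tail {m : ℕ} (hm : 1 ≤ m) {ρ : ℝ} (hρ : 0 < ρ) :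
    ∫⁻ s in Ioi ρ, ENNReal.ofReal ((s ^ (m + 1))⁻¹) ≤ ENNReal.ofReal ((ρ ^ m)⁻¹) := by
  have hm' : (1 : ℝ) ≤ m := by exact_mod_cast hm
  have ha : (-((m + 1 : ℕ) : ℝ)) < -1 := by push_cast; linarith
  have h1 : ∀ s ∈ Ioi ρ, (s ^ (m + 1))⁻¹ = s ^ (-((m + 1 : ℕ) : ℝ)) := by
    intro s hs
    rw [Real.rpow_neg (hρ.le.trans (le_of_lt hs)), Real.rpow_natCast]
  rw [setLIntegral_congr_fun measurableSet_Ioi (fun s hs => by rw [h1 s hs]),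
    ← ofReal_integral_eq_lintegral_ofReal (integrableOn_Ioi_rpow_of_lt ha hρ),
    integral_Ioi_rpow_of_lt ha hρ]
  · apply ENNReal.ofReal_le_ofReal
    have : (-((m + 1 : ℕ) : ℝ) + 1) = -(m : ℝ) := by push_cast; ring
    rw [this, Real.rpow_neg hρ.le, Real.rpow_natCast, neg_div_neg_eq]
    exact div_le_self (by positivity) hm'
  · filter_upwards [ae_restrict_mem measurableSet_Ioi] with s hs
    exact Real.rpow_nonneg (hρ.le.trans (le_of_lt hs)) _

theorem dist_sphere_ge {n : ℕ} (x : En n) (ξ : sphere (0 : En n) 1) :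
    1 - ‖x‖ ≤ ‖(ξ : En n) - x‖ := by
  have := norm_sub_norm_le (ξ : En n) x
  simpa using this

theorem exists_radial {n : ℕ} (hn : 1 ≤ n) (x : En n) :
    ∃ ζ : En n, ‖ζ‖ = 1 ∧ x = ‖x‖ • ζ := by
  by_cases h : x = 0
  · refine ⟨EuclideanSpace.single ⟨0, hn⟩ 1, by simp, by simp [h]⟩
  · have h' : ‖x‖ ≠ 0 := norm_ne_zero_iff.2 h
    exact ⟨‖x‖⁻¹ • x, by simp [norm_smul, h'], by simp [smul_smul, h']⟩

theorem lintegral_pow_sphere {m : ℕ} {x : En (m + 2)} (hx : ‖x‖ < 1) :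
    ∫⁻ ξ, ENNReal.ofReal ((‖(ξ : En (m + 2)) - x‖ ^ (2 * m + 2))⁻¹) ∂(sigmaMeasure (m + 2))
      = ENNReal.ofReal (((1 - ‖x‖ ^ 2) ^ (m + 1))⁻¹) := by
  have hA : 0 < 1 - ‖x‖ ^ 2 := by nlinarith [norm_nonneg x]
  have h : ∀ ξ : sphere (0 : En (m + 2)) 1,
      ENNReal.ofReal ((‖(ξ : En (m + 2)) - x‖ ^ (2 * m + 2))⁻¹) =
      ENNReal.ofReal (((1 - ‖x‖ ^ 2) ^ (m + 1))⁻¹) * ENNReal.ofReal (Ph (m + 2) x ξ) := by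
    intro ξ
    rw [← ENNReal.ofReal_mul (by positivity), Ph, div_pow, ← pow_mul]
    congr 1
    rw [show 2 * (m + 2 - 1) = 2 * m + 2 by omega, show m + 2 - 1 = m + 1 by omega]
    field_simp
  rw [lintegral_congr h, lintegral_const_mul' _ _ ENNReal.ofReal_ne_top,
    Ph_lintegral (by omega) hx, mul_one]

instance (n : ℕ) : IsFiniteMeasure (sigmaMeasure n) := by
  unfold sigmaMeasure
  by_cases h : (volume : Measure (En n)).toSphere univ = 0
  · rw [Measure.measure_univ_eq_zero.1 h, smul_zero]
    infer_instance
  · refine ⟨?_⟩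
    rw [Measure.smul_apply, smul_eq_mul]
    exact ENNReal.mul_lt_top (ENNReal.inv_lt_top.2 (pos_iff_ne_zero.2 h)) (measure_lt_top _ _)

/-- A kernel of homogeneity one order below that of the Poisson kernel: the power is integrated
along the ray through `x`, where the total mass of the Poisson kernel is known. -/
theorem lintegral_pow_sphere_le {m : ℕ} (hm : 1 ≤ m) {x : En (m + 2)} (hx : ‖x‖ < 1) :
    ∫⁻ ξ, ENNReal.ofReal ((‖(ξ : En (m + 2)) - x‖ ^ (2 * m + 1))⁻¹) ∂(sigmaMeasure (m + 2))
      ≤ ENNReal.ofReal (4 ^ (m + 2) * 2 ^ (m + 1) * ((1 - ‖x‖) ^ m)⁻¹) := by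
  obtain ⟨ζ, hζ, hxζ⟩ := exists_radial (by omega) x
  set ρ := 1 - ‖x‖ with hρd
  have hρ : 0 < ρ := by linarith
  have hρ1 : ρ ≤ 1 := by linarith [norm_nonneg x]
  have hxn : ‖x‖ = 1 - ρ := by linarith
  have hns : ∀ s ∈ Ioc ρ (3 / 2), ‖(1 - s) • ζ‖ < 1 := by
    intro s hs
    rw [norm_smul, hζ, mul_one, Real.norm_eq_abs, abs_lt]
    constructor <;> linarith [hs.1, hs.2]
  -- The mass of the Poisson kernel at the point `(1 - s) • ζ`.
  have hmass : ∀ s ∈ Ioc ρ (3 / 2),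
      ∫⁻ ξ, ENNReal.ofReal ((‖(ξ : En (m + 2)) - (1 - s) • ζ‖ ^ (2 * m + 2))⁻¹)
        ∂(sigmaMeasure (m + 2)) ≤ ENNReal.ofReal (2 ^ (m + 1)) *
          ENNReal.ofReal ((s ^ (m + 1))⁻¹) := by
    intro s hs
    have hs0 : 0 < s := hρ.trans hs.1
    rw [lintegral_pow_sphere (hns s hs), ← ENNReal.ofReal_mul (by positivity)]
    apply ENNReal.ofReal_le_ofReal
    rw [norm_smul, hζ, mul_one, Real.norm_eq_abs, sq_abs, ← div_eq_mul_inv, ← div_pow, ← inv_pow]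
    have h1 : s / 2 ≤ 1 - (1 - s) ^ 2 := by nlinarith [hs.2]
    gcongr
    · have := hs.2
      exact inv_nonneg.2 (by linarith)
    · rw [inv_eq_one_div, div_le_div_iff₀ (by linarith) hs0]; linarith
  have hpt : ∀ ξ : sphere (0 : En (m + 2)) 1,
      ENNReal.ofReal ((‖(ξ : En (m + 2)) - x‖ ^ (2 * m + 1))⁻¹) ≤
        ENNReal.ofReal (4 ^ (m + 2)) * ∫⁻ s in Ioc ρ (3 / 2),
          ENNReal.ofReal ((‖(ξ : En (m + 2)) - (1 - s) • ζ‖ ^ (2 * m + 2))⁻¹) := by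
    intro ξ
    set d := ‖(ξ : En (m + 2)) - x‖ with hd
    have hρd : ρ ≤ d := dist_sphere_ge x ξ
    have hd0 : 0 < d := hρ.trans_le hρd
    have hd2 : d ≤ 2 := by
      have := norm_sub_le (ξ : En (m + 2)) x
      have h1 : ‖(ξ : En (m + 2))‖ = 1 := by simp
      linarith
    have hsub : Ioc ρ (ρ + d / 4) ⊆ Ioc ρ (3 / 2) := Ioc_subset_Ioc_right (by linarith)
    calc ENNReal.ofReal ((d ^ (2 * m + 1))⁻¹)
        = ENNReal.ofReal (4 ^ (m + 2)) *
          (ENNReal.ofReal (((2 * d) ^ (2 * m + 2))⁻¹) * volume (Ioc ρ (ρ + d / 4))) := by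
          rw [Real.volume_Ioc, ← ENNReal.ofReal_mul (by positivity),
            ← ENNReal.ofReal_mul (by positivity)]
          congr 1
          rw [mul_pow, show (4 : ℝ) = 2 ^ 2 by norm_num, ← pow_mul]
          field_simp
          ring
      _ = ENNReal.ofReal (4 ^ (m + 2)) * ∫⁻ s in Ioc ρ (ρ + d / 4),
          ENNReal.ofReal (((2 * d) ^ (2 * m + 2))⁻¹) := by rw [setLIntegral_const]
      _ ≤ ENNReal.ofReal (4 ^ (m + 2)) * ∫⁻ s in Ioc ρ (ρ + d / 4),
          ENNReal.ofReal ((‖(ξ : En (m + 2)) - (1 - s) • ζ‖ ^ (2 * m + 2))⁻¹) := by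
          refine mul_le_mul_right ?_ _
          refine setLIntegral_mono' measurableSet_Ioc fun s hs => ?_
          apply ENNReal.ofReal_le_ofReal
          have h1 := dist_sphere_ge ((1 - s) • ζ) ξ
          have h2 : 0 < ‖(ξ : En (m + 2)) - (1 - s) • ζ‖ := by
            linarith [hns s (hsub hs)]
          have h3 : ‖(ξ : En (m + 2)) - (1 - s) • ζ‖ ≤ d + (s - ρ) := by
            have : (ξ : En (m + 2)) - (1 - s) • ζ = (ξ - x) + (s - ρ) • ζ := by
              have hx2 : x = (1 - ρ) • ζ := by rw [← hxn]; exact hxζ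
              rw [hx2]
              module
            rw [this]
            refine (norm_add_le _ _).trans ?_
            rw [norm_smul, hζ, mul_one, Real.norm_eq_abs, abs_of_pos (by linarith [hs.1])]
          gcongr
          linarith [hs.2]
      _ ≤ _ := by
          gcongr
  calc _ ≤ ∫⁻ ξ, ENNReal.ofReal (4 ^ (m + 2)) * (∫⁻ s in Ioc ρ (3 / 2),
          ENNReal.ofReal ((‖((ξ : sphere (0 : En (m + 2)) 1) : En (m + 2)) - (1 - s) • ζ‖
            ^ (2 * m + 2))⁻¹)) ∂(sigmaMeasure (m + 2)) := lintegral_mono hpt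
    _ = ENNReal.ofReal (4 ^ (m + 2)) * ∫⁻ s in Ioc ρ (3 / 2), (∫⁻ ξ,
          ENNReal.ofReal ((‖((ξ : sphere (0 : En (m + 2)) 1) : En (m + 2)) - (1 - s) • ζ‖
            ^ (2 * m + 2))⁻¹) ∂(sigmaMeasure (m + 2))) := by
        rw [lintegral_const_mul' _ _ ENNReal.ofReal_ne_top, lintegral_lintegral_swap]
        exact Measurable.aemeasurable (by unfold Function.uncurry; fun_prop)
    _ ≤ ENNReal.ofReal (4 ^ (m + 2)) * ∫⁻ s in Ioc ρ (3 / 2), ENNReal.ofReal (2 ^ (m + 1)) *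
          ENNReal.ofReal ((s ^ (m + 1))⁻¹) := by
        refine mul_le_mul_right ?_ _
        exact setLIntegral_mono' measurableSet_Ioc hmass
    _ ≤ ENNReal.ofReal (4 ^ (m + 2)) * (ENNReal.ofReal (2 ^ (m + 1)) *
          ENNReal.ofReal ((ρ ^ m)⁻¹)) := by
        rw [lintegral_const_mul' _ _ ENNReal.ofReal_ne_top]
        gcongr
        exact (lintegral_mono_set Ioc_subset_Ioi_self).trans (lintegral_tail hm hρ)
    _ = _ := by
        rw [← ENNReal.ofReal_mul (by positivity), ← ENNReal.ofReal_mul (by positivity), ← mul_assoc]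

/-! ### From local to global Lipschitz bounds -/

theorem norm_le_of_enorm_le {E : Type*} [NormedAddCommGroup E] {v : E} {b : ℝ} (hb : 0 ≤ b)
    (h : ‖v‖ₑ ≤ ENNReal.ofReal b) : ‖v‖ ≤ b := by
  rwa [← ofReal_norm, ENNReal.ofReal_le_ofReal_iff hb] at h

/-- A local Lipschitz estimate, valid at scales comparable to the distance to the sphere, is
global, by convexity of the ball. -/
theorem lipschitz_of_local {n : ℕ} {f : En n → En n} {C : ℝ}
    (h : ∀ x y : En n, ‖x‖ < 1 → ‖y‖ < 1 → ‖x - y‖ ≤ (1 - ‖x‖) / 20 →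
      ‖f x - f y‖ ≤ C * ‖x - y‖) {x y : En n} (hx : ‖x‖ < 1) (hy : ‖y‖ < 1) :
    ‖f x - f y‖ ≤ C * ‖x - y‖ := by
  set R := max ‖x‖ ‖y‖ with hR
  have hR1 : R < 1 := max_lt hx hy
  obtain ⟨N, hN⟩ := exists_nat_gt (‖x - y‖ / ((1 - R) / 20))
  have hN0 : (0 : ℝ) < N := lt_of_le_of_lt (div_nonneg (norm_nonneg _) (by linarith)) hN
  set p : ℕ → En n := fun i => x + ((i : ℝ) / N) • (y - x) with hp
  have hpR : ∀ i ≤ N, ‖p i‖ ≤ R := by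
    intro i hi
    have ht1 : (i : ℝ) / N ≤ 1 := (div_le_one hN0).2 (by exact_mod_cast hi)
    have ht0 : 0 ≤ (i : ℝ) / N := by positivity
    have := (convex_closedBall (0 : En n) R) (x := x) (by simp [hR]) (y := y) (by simp [hR])
      (sub_nonneg.2 ht1) ht0 (by ring)
    rw [mem_closedBall_zero_iff] at this
    have e : p i = (1 - (i : ℝ) / N) • x + ((i : ℝ) / N) • y := by
      simp only [hp]
      module
    rwa [e]
  have hstep : ∀ i, ‖p i - p (i + 1)‖ = ‖x - y‖ / N := by
    intro i
    have : p i - p (i + 1) = (1 / (N : ℝ)) • (x - y) := by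
      simp only [hp]
      push_cast
      rw [add_div]
      module
    rw [this, norm_smul, Real.norm_eq_abs, abs_of_pos (by positivity)]
    ring
  have h0 : p 0 = x := by simp [hp]
  have h1 : p N = y := by simp [hp, hN0.ne']
  have := dist_le_range_sum_dist (fun i => f (p i)) N
  simp only [h0, h1, dist_eq_norm] at this
  refine this.trans ?_
  calc ∑ i ∈ Finset.range N, ‖f (p i) - f (p (i + 1))‖
      ≤ ∑ i ∈ Finset.range N, C * (‖x - y‖ / N) := by
        refine Finset.sum_le_sum fun i hi => ?_
        have hi : i < N := Finset.mem_range.1 hi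
        have ha := hpR i hi.le
        rw [← hstep i]
        refine h _ _ (ha.trans_lt hR1) ((hpR (i + 1) hi).trans_lt hR1) ?_
        rw [hstep i, div_le_iff₀ hN0]
        rw [div_lt_iff₀ (by linarith)] at hN
        nlinarith
    _ = C * ‖x - y‖ := by
        rw [Finset.sum_const, Finset.card_range, nsmul_eq_mul]
        field_simp

theorem abs_sq_sub_sq_le {n : ℕ} {x x' : En n} (hx : ‖x‖ < 1) (hx' : ‖x'‖ < 1) :
    |(1 - ‖x‖ ^ 2) - (1 - ‖x'‖ ^ 2)| ≤ 2 * ‖x - x'‖ := by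
  have h1 := abs_norm_sub_norm_le x x'
  have : (1 - ‖x‖ ^ 2) - (1 - ‖x'‖ ^ 2) = -((‖x‖ - ‖x'‖) * (‖x‖ + ‖x'‖)) := by ring
  rw [this, abs_neg, abs_mul, abs_of_nonneg (by positivity : 0 ≤ ‖x‖ + ‖x'‖)]
  nlinarith [abs_nonneg (‖x‖ - ‖x'‖), norm_nonneg (x - x'), norm_nonneg x, norm_nonneg x']

/-! ### The Poisson–Szegő integral of a Lipschitz map -/

/-- The logarithmic gradient of `A / d ^ 2` is of size `1 / ρ`, in finite difference form. -/
theorem abs_base_sub_le {A A' d d' δ ρ : ℝ} (hρ : 0 < ρ) (hρd : ρ ≤ d) (hρA : ρ ≤ A)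
    (hδ : δ ≤ ρ / 20) (hδ0 : 0 ≤ δ) (hd : |d - d'| ≤ δ) (hA : |A - A'| ≤ 2 * δ) :
    |A / d ^ 2 - A' / d' ^ 2| ≤ 5 * δ / ρ * (A / d ^ 2) := by
  have hd0 : 0 < d := hρ.trans_le hρd
  have hA0 : 0 < A := hρ.trans_le hρA
  obtain ⟨h1, h2⟩ := abs_le.1 hd
  have hd' : 19 / 20 * d ≤ d' := by linarith
  have hd'0 : 0 < d' := by linarith
  have hn : |A * d' ^ 2 - A' * d ^ 2| ≤ 41 / 10 * δ * A * d ^ 2 / ρ := by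
    have e1 : A * d' ^ 2 - A' * d ^ 2 = A * ((d' - d) * (d' + d)) + (A - A') * d ^ 2 := by ring
    have e2 : |A * ((d' - d) * (d' + d))| ≤ A * (δ * (21 / 10 * d)) := by
      rw [abs_mul, abs_mul, abs_of_pos hA0, abs_sub_comm, abs_of_pos (by linarith : 0 < d' + d)]
      gcongr
      linarith
    have e3 : |(A - A') * d ^ 2| ≤ 2 * δ * d ^ 2 := by
      rw [abs_mul, abs_of_pos (by positivity : 0 < d ^ 2)]
      gcongr
    have e4 : A * (δ * (21 / 10 * d)) ≤ 21 / 10 * δ * A * d ^ 2 / ρ := by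
      rw [le_div_iff₀ hρ]
      have : A * (δ * (21 / 10 * d)) * ρ ≤ A * (δ * (21 / 10 * d)) * d := by gcongr
      linarith
    have e5 : 2 * δ * d ^ 2 ≤ 2 * δ * A * d ^ 2 / ρ := by
      rw [le_div_iff₀ hρ]
      have : 2 * δ * d ^ 2 * ρ ≤ 2 * δ * d ^ 2 * A := by gcongr
      linarith
    rw [e1]
    refine (abs_add_le _ _).trans ((add_le_add (e2.trans e4) (e3.trans e5)).trans (le_of_eq ?_))
    ring
  rw [div_sub_div _ _ (by positivity) (by positivity), abs_div,
    abs_of_pos (by positivity : 0 < d ^ 2 * d' ^ 2), div_le_iff₀ (by positivity)]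
  rw [show d ^ 2 * A' = A' * d ^ 2 by ring]
  refine hn.trans ?_
  have : (19 / 20 * d) ^ 2 ≤ d' ^ 2 := by gcongr
  have h5 : 41 / 10 * d ^ 2 ≤ 5 * d' ^ 2 := by nlinarith
  calc 41 / 10 * δ * A * d ^ 2 / ρ = (δ * A / ρ) * (41 / 10 * d ^ 2) := by ring
    _ ≤ (δ * A / ρ) * (5 * d' ^ 2) := by gcongr
    _ = _ := by field_simp

/-- Replacing `x` by a point at distance at most `(1 - |x|) / 20`, the Poisson–Szegő kernel changes by
at most a constant times `|x - x'| (1 - |x|)^m / |ξ - x|^(2m+2)`. -/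
theorem abs_Ph_sub_le {m : ℕ} {x x' : En (m + 2)} (hx : ‖x‖ < 1) (hx' : ‖x'‖ < 1)
    (hδ : ‖x - x'‖ ≤ (1 - ‖x‖) / 20) (ξ : sphere (0 : En (m + 2)) 1) :
    |Ph (m + 2) x ξ - Ph (m + 2) x' ξ| ≤
      5 * (m + 1) * 4 ^ (m + 1) * ‖x - x'‖ * (1 - ‖x‖) ^ m
        * (‖(ξ : En (m + 2)) - x‖ ^ (2 * m + 2))⁻¹ := by
  set d := ‖(ξ : En (m + 2)) - x‖ with hd
  set ρ := 1 - ‖x‖ with hρd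
  have hρ : 0 < ρ := by linarith
  have hdρ : ρ ≤ d := dist_sphere_ge x ξ
  have hd0 : 0 < d := hρ.trans_le hdρ
  have hxn := norm_nonneg x
  have hAρ : ρ ≤ 1 - ‖x‖ ^ 2 := by nlinarith
  have hA2 : 1 - ‖x‖ ^ 2 ≤ 2 * ρ := by nlinarith
  have hdd : |d - ‖(ξ : En (m + 2)) - x'‖| ≤ ‖x - x'‖ := by
    refine (abs_norm_sub_norm_le _ _).trans (le_of_eq ?_)
    rw [sub_sub_sub_cancel_left, norm_sub_rev]
  have hb := abs_base_sub_le hρ hdρ hAρ hδ (norm_nonneg _) hdd (abs_sq_sub_sq_le hx hx')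
  set a := (1 - ‖x‖ ^ 2) / d ^ 2 with ha
  set a' := (1 - ‖x'‖ ^ 2) / ‖(ξ : En (m + 2)) - x'‖ ^ 2 with ha'
  have ha0 : 0 < a := by
    have : 0 < 1 - ‖x‖ ^ 2 := by linarith
    positivity
  have hmax : max |a| |a'| ≤ 2 * a := by
    have h1 : 5 * ‖x - x'‖ / ρ * a ≤ a := by
      have : 5 * ‖x - x'‖ / ρ ≤ 1 := by rw [div_le_one hρ]; linarith
      nlinarith
    have h2 := abs_le.1 (hb.trans h1)
    rw [abs_of_pos ha0]
    refine max_le (by linarith) (abs_le.2 ⟨by linarith, by linarith⟩)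
  have hP : |a ^ (m + 1) - a' ^ (m + 1)| ≤
      (5 * ‖x - x'‖ / ρ * a) * ((m : ℝ) + 1) * (2 * a) ^ m := by
    refine (abs_pow_sub_pow_le a a' (m + 1)).trans ?_
    push_cast
    have h0 : 0 ≤ max |a| |a'| := le_max_of_le_left (abs_nonneg _)
    gcongr
  have haρ : a ≤ 2 * ρ / d ^ 2 := by rw [ha]; gcongr
  have e : Ph (m + 2) x ξ - Ph (m + 2) x' ξ = a ^ (m + 1) - a' ^ (m + 1) := rfl
  rw [e]
  refine hP.trans ?_
  calc (5 * ‖x - x'‖ / ρ * a) * ((m : ℝ) + 1) * (2 * a) ^ m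
      ≤ (5 * ‖x - x'‖ / ρ * (2 * ρ / d ^ 2)) * ((m : ℝ) + 1) * (2 * (2 * ρ / d ^ 2)) ^ m := by
        gcongr
    _ = 5 * ((m : ℝ) + 1) * (2 * 4 ^ m) * ‖x - x'‖ * ρ ^ m * (d ^ (2 * m + 2))⁻¹ := by
        rw [show 2 * (2 * ρ / d ^ 2) = 4 * ρ / d ^ 2 by ring, div_pow, mul_pow, ← pow_mul,
          pow_add d (2 * m)]
        field_simp
    _ ≤ _ := by
        gcongr
        rw [pow_succ]
        have : (0 : ℝ) < 4 ^ m := by positivity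
        linarith

theorem continuous_Ph {n : ℕ} {x : En n} (hx : ‖x‖ < 1) : Continuous (Ph n x) := by
  unfold Ph
  refine Continuous.pow (continuous_const.div (by fun_prop) fun ξ => ?_) _
  have := dist_sphere_ge x ξ
  have h : 0 < ‖(ξ : En n) - x‖ := by linarith
  positivity

theorem integrable_sphere {n : ℕ} {F : Type*} [NormedAddCommGroup F]
    {f : sphere (0 : En n) 1 → F} (hf : Continuous f) : Integrable f (sigmaMeasure n) :=
  hf.integrable_of_hasCompactSupport (HasCompactSupport.of_compactSpace f)

theorem Ph_nonneg {n : ℕ} {x : En n} (hx : ‖x‖ < 1) (ξ : sphere (0 : En n) 1) :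
    0 ≤ Ph n x ξ := by
  have : 0 ≤ 1 - ‖x‖ ^ 2 := by nlinarith [norm_nonneg x]
  unfold Ph
  positivity

theorem Ph_integral {n : ℕ} (hn : 1 ≤ n) {x : En n} (hx : ‖x‖ < 1) :
    ∫ ξ, Ph n x ξ ∂(sigmaMeasure n) = 1 := by
  rw [integral_eq_lintegral_of_nonneg_ae (Filter.Eventually.of_forall (Ph_nonneg hx))
    (continuous_Ph hx).aestronglyMeasurable, Ph_lintegral hn hx, ENNReal.toReal_one]

/-- Since the kernel has total mass one, a constant may be subtracted from the boundary values. -/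
theorem PhInt_eq {n : ℕ} (hn : 1 ≤ n) {x : En n} (hx : ‖x‖ < 1) {φ : En n → En n}
    (hφ : Continuous fun ξ : sphere (0 : En n) 1 => φ ξ) (c : En n) :
    PhInt n φ x = c + ∫ ξ, Ph n x ξ • (φ (ξ : En n) - c) ∂(sigmaMeasure n) := by
  have hP := continuous_Ph hx
  have h1 : Integrable (fun ξ => Ph n x ξ • c) (sigmaMeasure n) := integrable_sphere (by fun_prop)
  have h2 : Integrable (fun ξ => Ph n x ξ • φ (ξ : En n)) (sigmaMeasure n) :=
    integrable_sphere (hP.smul hφ)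
  simp_rw [smul_sub]
  rw [integral_sub h2 h1, integral_smul_const, Ph_integral hn hx, one_smul, PhInt]
  abel

/-- The local Lipschitz estimate for the Poisson–Szegő integral: with the value of `φ` at the radial
projection of `x` subtracted, the Lipschitz bound on `φ` gains one power of `|ξ - x|`. -/
theorem PhInt_local {m : ℕ} (hm : 1 ≤ m) : ∃ C : ℝ, 0 ≤ C ∧ ∀ L : ℝ, 0 ≤ L →
    ∀ φ : En (m + 2) → En (m + 2),
    (∀ ξ ∈ sphere (0 : En (m + 2)) 1, ∀ η ∈ sphere (0 : En (m + 2)) 1,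
        ‖φ ξ - φ η‖ ≤ L * ‖ξ - η‖) →
    ∀ x x' : En (m + 2), ‖x‖ < 1 → ‖x'‖ < 1 → ‖x - x'‖ ≤ (1 - ‖x‖) / 20 →
      ‖PhInt (m + 2) φ x - PhInt (m + 2) φ x'‖ ≤ C * L * ‖x - x'‖ := by
  refine ⟨5 * (m + 1) * 4 ^ (m + 1) * 2 * (4 ^ (m + 2) * 2 ^ (m + 1)), by positivity, ?_⟩
  intro L hL φ hφ x x' hx hx' hδ
  have hφc : Continuous fun ξ : sphere (0 : En (m + 2)) 1 => φ ξ := by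
    refine (LipschitzWith.of_dist_le_mul (K := ⟨L, hL⟩) fun ξ η => ?_).continuous
    rw [dist_eq_norm, Subtype.dist_eq, dist_eq_norm]
    exact hφ ξ ξ.2 η η.2
  obtain ⟨ζ, hζ, hxζ⟩ := exists_radial (by omega) x
  set ρ := 1 - ‖x‖ with hρd
  have hρ : 0 < ρ := by linarith
  have hxζ' : ‖x - ζ‖ = ρ := by
    have : x - ζ = (‖x‖ - 1) • ζ := by
      rw [sub_smul, one_smul, ← hxζ]
    rw [this, norm_smul, hζ, mul_one, Real.norm_eq_abs, abs_of_neg (by linarith)]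
    ring
  have hP := continuous_Ph hx
  have hP' := continuous_Ph hx'
  have hdiff : PhInt (m + 2) φ x - PhInt (m + 2) φ x' =
      ∫ ξ, (Ph (m + 2) x ξ - Ph (m + 2) x' ξ) • (φ (ξ : En (m + 2)) - φ ζ)
        ∂(sigmaMeasure (m + 2)) := by
    rw [PhInt_eq (by omega) hx hφc (φ ζ), PhInt_eq (by omega) hx' hφc (φ ζ),
      add_sub_add_left_eq_sub]
    simp_rw [sub_smul]
    exact (integral_sub (integrable_sphere (hP.smul (hφc.sub continuous_const)))
      (integrable_sphere (hP'.smul (hφc.sub continuous_const)))).symm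
  set c := 5 * ((m : ℝ) + 1) * 4 ^ (m + 1) * ‖x - x'‖ * ρ ^ m * (2 * L) with hc
  have hc0 : 0 ≤ c := by positivity
  have hpt : ∀ ξ : sphere (0 : En (m + 2)) 1,
      ‖(Ph (m + 2) x ξ - Ph (m + 2) x' ξ) • (φ (ξ : En (m + 2)) - φ ζ)‖ₑ ≤
        ENNReal.ofReal c * ENNReal.ofReal ((‖(ξ : En (m + 2)) - x‖ ^ (2 * m + 1))⁻¹) := by
    intro ξ
    rw [← ofReal_norm, ← ENNReal.ofReal_mul hc0, norm_smul, Real.norm_eq_abs]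
    apply ENNReal.ofReal_le_ofReal
    have hdρ : ρ ≤ ‖(ξ : En (m + 2)) - x‖ := dist_sphere_ge x ξ
    have h1 := abs_Ph_sub_le hx hx' hδ ξ
    rw [← hρd] at h1
    have h2 : ‖φ (ξ : En (m + 2)) - φ ζ‖ ≤ L * (2 * ‖(ξ : En (m + 2)) - x‖) := by
      refine (hφ ξ ξ.2 ζ (by simpa using hζ)).trans ?_
      gcongr
      have : (ξ : En (m + 2)) - ζ = (ξ - x) + (x - ζ) := by abel
      rw [this]
      refine (norm_add_le _ _).trans ?_
      linarith
    set d := ‖(ξ : En (m + 2)) - x‖ with hd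
    have hd0 : 0 < d := hρ.trans_le hdρ
    refine (mul_le_mul h1 h2 (norm_nonneg _) (by positivity)).trans (le_of_eq ?_)
    rw [hc, pow_succ d (2 * m + 1)]
    field_simp
  refine norm_le_of_enorm_le (by positivity) ?_
  rw [hdiff]
  refine (enorm_integral_le_lintegral_enorm _).trans ((lintegral_mono hpt).trans ?_)
  rw [lintegral_const_mul' _ _ ENNReal.ofReal_ne_top]
  refine (mul_le_mul_right (lintegral_pow_sphere_le hm hx) _).trans ?_
  rw [← ENNReal.ofReal_mul hc0]
  apply ENNReal.ofReal_le_ofReal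
  rw [hc, ← hρd]
  refine le_of_eq ?_
  field_simp

/-! ### Möbius distance and the radial Green function -/

theorem qbracket_sq {n : ℕ} {x y : En n} (hx : ‖x‖ < 1) (hy : ‖y‖ < 1) :
    qbracket x y ^ 2 = ‖x - y‖ ^ 2 + (1 - ‖x‖ ^ 2) * (1 - ‖y‖ ^ 2) := by
  have h1 : 0 < 1 - ‖x‖ ^ 2 := by nlinarith [norm_nonneg x]
  have h2 : 0 < 1 - ‖y‖ ^ 2 := by nlinarith [norm_nonneg y]
  rw [qbracket, Real.sq_sqrt (by positivity), norm_sub_rev]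
  ring

theorem qbracket_pos {n : ℕ} {x y : En n} (hx : ‖x‖ < 1) (hy : ‖y‖ < 1) :
    0 < qbracket x y := by
  have h1 : 0 < 1 - ‖x‖ ^ 2 := by nlinarith [norm_nonneg x]
  have h2 : 0 < 1 - ‖y‖ ^ 2 := by nlinarith [norm_nonneg y]
  exact Real.sqrt_pos.2 (by positivity)

/-- `|φ_x(y)| = |x - y| / [x, y]`. -/
theorem norm_mobius {n : ℕ} {x y : En n} (hx : ‖x‖ < 1) (hy : ‖y‖ < 1) :
    ‖mobius x y‖ = ‖x - y‖ / qbracket x y := by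
  have hq := qbracket_pos hx hy
  have hq2 := qbracket_sq hx hy
  set q := qbracket x y with hqd
  have hv : ‖‖y - x‖ ^ 2 • x - (1 - ‖x‖ ^ 2) • (y - x)‖ = ‖x - y‖ * q := by
    rw [← sq_eq_sq₀ (norm_nonneg _) (by positivity), mul_pow, hq2, norm_sub_rev x y]
    have hy2 : ‖y‖ ^ 2 = ‖x‖ ^ 2 + 2 * inner ℝ x (y - x) + ‖y - x‖ ^ 2 := by
      rw [← norm_add_sq_real, add_sub_cancel]
    rw [norm_sub_sq_real, norm_smul, norm_smul, inner_smul_left, inner_smul_right, mul_pow,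
      mul_pow, Real.norm_eq_abs, Real.norm_eq_abs, sq_abs, sq_abs, hy2]
    simp only [conj_trivial]
    ring
  rw [mobius, norm_smul, ← hqd, hv, norm_inv, Real.norm_eq_abs, abs_of_pos (by positivity)]
  field_simp

theorem one_sub_norm_le_qbracket {n : ℕ} {x y : En n} (hx : ‖x‖ < 1) (hy : ‖y‖ < 1) :
    1 - ‖x‖ ≤ qbracket x y ∧ 1 - ‖y‖ ≤ qbracket x y ∧ ‖x - y‖ ≤ qbracket x y := by
  have hq := qbracket_pos hx hy
  have hq2 := qbracket_sq hx hy
  have h0 := norm_nonneg x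
  have h0' := norm_nonneg y
  have h1 : 0 < 1 - ‖x‖ ^ 2 := by nlinarith [norm_nonneg x]
  have h2 : 0 < 1 - ‖y‖ ^ 2 := by nlinarith [norm_nonneg y]
  have h3 := abs_norm_sub_norm_le x y
  have h4 : (‖x‖ - ‖y‖) ^ 2 ≤ ‖x - y‖ ^ 2 := by
    rw [← sq_abs (‖x‖ - ‖y‖)]
    gcongr
  have h5 : 1 - ‖x‖ * ‖y‖ ≤ qbracket x y := by
    refine le_of_abs_le (abs_le_of_sq_le_sq ?_ hq.le)
    nlinarith
  refine ⟨by nlinarith, by nlinarith, ?_⟩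
  refine le_of_abs_le (abs_le_of_sq_le_sq ?_ hq.le)
  nlinarith [mul_pos h1 h2]

theorem continuousOn_gfun_integrand (m : ℕ) :
    ContinuousOn (fun s : ℝ => (1 - s ^ 2) ^ m / s ^ (m + 1)) (Ioi 0) := by
  refine ContinuousOn.div (by fun_prop) (by fun_prop) fun s hs => ?_
  have : 0 < s := hs
  positivity

theorem gfun_integrand_anti (m : ℕ) {a b : ℝ} (ha : 0 < a) (hab : a ≤ b) (hb : b ≤ 1) :
    (1 - b ^ 2) ^ m / b ^ (m + 1) ≤ (1 - a ^ 2) ^ m / a ^ (m + 1) := by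
  have h0 : 0 ≤ 1 - b ^ 2 := by nlinarith
  have h1 : 0 ≤ 1 - a ^ 2 := by nlinarith
  gcongr

/-- The mean value inequality for `g`: its derivative is monotone in modulus, hence bounded on the
segment by the sum of its values at the two ends. -/
theorem abs_gfun_sub_le {m : ℕ} {r r' : ℝ} (hr : 0 < r) (hr1 : r ≤ 1) (hr' : 0 < r')
    (hr1' : r' ≤ 1) :
    |gfun (m + 2) r - gfun (m + 2) r'| ≤
      |r - r'| * ((1 - r ^ 2) ^ m / r ^ (m + 1) + (1 - r' ^ 2) ^ m / r' ^ (m + 1)) := by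
  set f : ℝ → ℝ := fun s => (1 - s ^ 2) ^ m / s ^ (m + 1) with hf
  have hi : ∀ a b : ℝ, 0 < a → 0 < b → IntervalIntegrable f volume a b := fun a b ha hb =>
    ((continuousOn_gfun_integrand m).mono fun s hs =>
      (lt_min ha hb).trans_le hs.1).intervalIntegrable
  have hf0 : ∀ s, 0 < s → s ≤ 1 → 0 ≤ f s := fun s hs hs1 => by
    have : 0 ≤ 1 - s ^ 2 := by nlinarith
    simp only [hf]
    positivity
  have e : gfun (m + 2) r - gfun (m + 2) r' = 1 / ((m + 2 : ℕ) : ℝ) * ∫ s in r..r', f s := by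
    rw [← intervalIntegral.integral_add_adjacent_intervals (hi r 1 hr one_pos)
      (hi 1 r' one_pos hr'), intervalIntegral.integral_symm r' 1]
    simp only [gfun, hf]
    push_cast
    ring_nf
  have hb : ‖∫ s in r..r', f s‖ ≤ (f r + f r') * |r' - r| := by
    refine intervalIntegral.norm_integral_le_of_norm_le_const fun s hs => ?_
    have hs0 : min r r' < s := hs.1
    have hs1 : s ≤ max r r' := hs.2
    have hp : 0 < s := (lt_min hr hr').trans hs0
    have hs2 : s ≤ 1 := hs1.trans (max_le hr1 hr1')
    rw [Real.norm_eq_abs, abs_of_nonneg (hf0 s hp hs2)]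
    rcases min_cases r r' with h | h
    · rw [h.1] at hs0
      linarith [gfun_integrand_anti m hr hs0.le hs2, hf0 r' hr' hr1']
    · rw [h.1] at hs0
      linarith [gfun_integrand_anti m hr' hs0.le hs2, hf0 r hr hr1]
  rw [e, abs_mul, abs_of_nonneg (by positivity), abs_sub_comm r r', mul_comm |r' - r|]
  have h1 : 1 / ((m + 2 : ℕ) : ℝ) ≤ 1 := by
    rw [div_le_one (by positivity)]
    push_cast
    linarith [(Nat.cast_nonneg m : (0 : ℝ) ≤ m)]
  calc _ ≤ 1 * |∫ s in r..r', f s| := by gcongr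
    _ ≤ _ := by rw [one_mul]; exact hb

theorem continuousOn_gfun (m : ℕ) : ContinuousOn (gfun (m + 2)) (Ioc 0 1) := by
  intro r hr
  have h1 : Filter.Tendsto (fun r' => |r' - r| *
      ((1 - r' ^ 2) ^ m / r' ^ (m + 1) + (1 - r ^ 2) ^ m / r ^ (m + 1)))
      (nhdsWithin r (Ioc 0 1)) (nhds 0) := by
    have h := (continuousOn_gfun_integrand m).continuousAt (Ioi_mem_nhds hr.1)
    have : ContinuousAt (fun r' => |r' - r| *
      ((1 - r' ^ 2) ^ m / r' ^ (m + 1) + (1 - r ^ 2) ^ m / r ^ (m + 1))) r :=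
      ContinuousAt.mul (by fun_prop) (h.add continuousAt_const)
    have h2 := this.continuousWithinAt (s := Ioc 0 1) |>.tendsto
    simpa using h2
  rw [ContinuousWithinAt, tendsto_iff_norm_sub_tendsto_zero]
  refine squeeze_zero' (Filter.Eventually.of_forall fun _ => norm_nonneg _) ?_ h1
  filter_upwards [self_mem_nhdsWithin] with s hs
  exact abs_gfun_sub_le hs.1 hs.2 hr.1 hr.2

/-! ### Pointwise variation of the Green kernel -/

/-- Finite difference estimate for `|φ_x(y)| = d / q` in the variable `x`. -/
theorem abs_ratio_sub_le {A A' B d d' q q' δ : ℝ} (hd : 0 < d) (hd' : 0 < d') (hq : 0 < q)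
    (hq' : 0 < q') (hA' : 0 ≤ A') (hB : 0 ≤ B) (hA : 0 ≤ A)
    (e : q ^ 2 = d ^ 2 + A * B) (e' : q' ^ 2 = d' ^ 2 + A' * B)
    (hdd : |d - d'| ≤ δ) (hAA : |A - A'| ≤ 2 * δ) (hδ : 20 * δ ≤ q)
    (hAq' : A' ≤ 2 * q') (hBq : B ≤ 2 * q) (hBq' : B ≤ 2 * q') :
    |d / q - d' / q'| ≤ 10 * δ * B / q ^ 2 ∧ |d / q - d' / q'| ≤ 10 * δ * B / q' ^ 2 := by
  have hδ0 : 0 ≤ δ := (abs_nonneg _).trans hdd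
  have hdq : d ≤ q := le_of_abs_le (abs_le_of_sq_le_sq (by nlinarith [mul_nonneg hA hB]) hq.le)
  have hdq' : d' ≤ q' :=
    le_of_abs_le (abs_le_of_sq_le_sq (by nlinarith [mul_nonneg hA' hB]) hq'.le)
  have hqq : |q - q'| ≤ 3 * δ := by
    have h1 : |q - q'| * (q + q') ≤ 3 * δ * (q + q') := by
      rw [← abs_of_pos (by positivity : 0 < q + q'), ← abs_mul,
        abs_of_pos (by positivity : 0 < q + q')]
      have : (q - q') * (q + q') = (d - d') * (d + d') + (A - A') * B := by linarith
      rw [this]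
      refine (abs_add_le _ _).trans ?_
      rw [abs_mul, abs_mul, abs_of_nonneg hB, abs_of_pos (by positivity : 0 < d + d')]
      have h2 : |d - d'| * (d + d') ≤ δ * (q + q') := by gcongr
      have h3 : |A - A'| * B ≤ 2 * δ * (q + q') := by gcongr; linarith
      linarith
    exact le_of_mul_le_mul_right h1 (by positivity)
  obtain ⟨h1, h2⟩ := abs_le.1 hqq
  have hc1 : 17 / 20 * q ≤ q' := by linarith
  have hc2 : q' ≤ 23 / 20 * q := by linarith
  have hX : |d ^ 2 * A' - d' ^ 2 * A| ≤ 4 * δ * q' * (d + d') := by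
    have : d ^ 2 * A' - d' ^ 2 * A = A' * ((d - d') * (d + d')) + d' ^ 2 * (A' - A) := by ring
    rw [this]
    refine (abs_add_le _ _).trans ?_
    rw [abs_mul, abs_mul, abs_mul, abs_of_nonneg hA', abs_of_pos (by positivity : 0 < d + d'),
      abs_of_pos (by positivity : 0 < d' ^ 2), abs_sub_comm A' A]
    have h2 : A' * (|d - d'| * (d + d')) ≤ 2 * q' * (δ * (d + d')) := by gcongr
    have h3 : d' ^ 2 * |A - A'| ≤ q' * (d + d') * (2 * δ) := by
      rw [pow_two]
      gcongr
      linarith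
    linarith
  have hY : |d * q' - d' * q| ≤ 23 / 5 * δ * B := by
    have hs : 20 / 23 * q' * (d + d') ≤ d * q' + d' * q := by nlinarith
    have hs0 : 0 < 20 / 23 * q' * (d + d') := by positivity
    have h3 : |d * q' - d' * q| * (d * q' + d' * q) ≤ B * (4 * δ * q' * (d + d')) := by
      rw [← abs_of_pos (by positivity : 0 < d * q' + d' * q), ← abs_mul]
      have : (d * q' - d' * q) * (d * q' + d' * q) = B * (d ^ 2 * A' - d' ^ 2 * A) := by
        linear_combination d ^ 2 * e' - d' ^ 2 * e
      rw [this, abs_mul, abs_of_nonneg hB]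
      gcongr
    have h4 : |d * q' - d' * q| * (20 / 23 * q' * (d + d')) ≤
        23 / 5 * δ * B * (20 / 23 * q' * (d + d')) := by
      have : |d * q' - d' * q| * (20 / 23 * q' * (d + d')) ≤
        |d * q' - d' * q| * (d * q' + d' * q) := by gcongr
      linarith
    exact le_of_mul_le_mul_right h4 hs0
  have hZ : |d / q - d' / q'| ≤ 23 / 5 * δ * B / (q * q') := by
    rw [div_sub_div _ _ hq.ne' hq'.ne', abs_div, abs_of_pos (by positivity : 0 < q * q')]
    gcongr
    rwa [mul_comm q d']
  have hδB : 0 ≤ δ * B := by positivity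
  constructor
  · refine hZ.trans ?_
    rw [div_le_div_iff₀ (by positivity) (by positivity)]
    have : 17 / 20 * (q * q) ≤ q * q' := by nlinarith
    nlinarith
  · refine hZ.trans ?_
    rw [div_le_div_iff₀ (by positivity) (by positivity)]
    have : 20 / 23 * (q' * q') ≤ q * q' := by nlinarith
    nlinarith

/-- The radial kernel dominating difference quotients of the Green kernel, at a point at distance
`ρ` from the sphere; `t` is the distance to the second variable. -/
noncomputable def greenMajorant (m : ℕ) (ρ t : ℝ) : ℝ :=
  ρ ^ m * (max ρ t ^ (m + 1) * t ^ (m + 1))⁻¹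

/-- One of the two terms in the mean value inequality for `g`. Here `d = |x - y|`, `q = [x, y]`,
`A = 1 - |x|²`, `B = 1 - |y|²` and `p = |ψ(y)|`. The powers of `B` cancel: `m` come from `g'`, one
from the variation `D` of `d / q`, one from the decay of `ψ`, against `B ^ (m + 2)` from `τ`. -/
theorem greenTerm_le {m : ℕ} {A B d q δ ρ D p M : ℝ} (hA0 : 0 ≤ A) (hA : A ≤ 2 * ρ) (hB : 0 < B)
    (hρ : 0 < ρ) (hd : 0 < d) (hM : 0 ≤ M) (hδ : 0 ≤ δ)
    (e : q ^ 2 = d ^ 2 + A * B) (hρq : ρ ≤ q) (hdq : d ≤ q)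
    (hD : D ≤ 10 * δ * B / q ^ 2) (hp : p ≤ M * B) (hp0 : 0 ≤ p) :
    D * ((1 - (d / q) ^ 2) ^ m / (d / q) ^ (m + 1)) * p * (B ^ (m + 2))⁻¹ ≤
      10 * 2 ^ m * M * δ * greenMajorant m ρ d := by
  have hq : 0 < q := hρ.trans_le hρq
  have e1 : 1 - (d / q) ^ 2 = A * B / q ^ 2 := by
    rw [div_pow]
    field_simp
    linarith
  rw [e1]
  calc D * ((A * B / q ^ 2) ^ m / (d / q) ^ (m + 1)) * p * (B ^ (m + 2))⁻¹
      ≤ (10 * δ * B / q ^ 2) * ((A * B / q ^ 2) ^ m / (d / q) ^ (m + 1)) * (M * B)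
          * (B ^ (m + 2))⁻¹ := by gcongr
    _ = 10 * M * δ * A ^ m * (q ^ (m + 1) * d ^ (m + 1))⁻¹ := by
        rw [div_pow, div_pow, mul_pow, pow_add B]
        field_simp
        ring
    _ ≤ 10 * M * δ * (2 * ρ) ^ m * (max ρ d ^ (m + 1) * d ^ (m + 1))⁻¹ := by
        gcongr
        exact max_le hρq hdq
    _ = _ := by rw [greenMajorant, mul_pow]; ring

/-- The integrand of the difference of two Green integrals, with the density of `τ` included. -/
theorem Gh_diff_le {m : ℕ} {x x' y : En (m + 2)} (hx : ‖x‖ < 1) (hx' : ‖x'‖ < 1) (hy : ‖y‖ < 1)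
    (hxy : y ≠ x) (hxy' : y ≠ x') (hδ : ‖x - x'‖ ≤ (1 - ‖x‖) / 20) {M p : ℝ} (hM : 0 ≤ M)
    (hp0 : 0 ≤ p) (hp : p ≤ M * (1 - ‖y‖ ^ 2)) :
    |Gh (m + 2) x y - Gh (m + 2) x' y| * p * ((1 - ‖y‖ ^ 2) ^ (m + 2))⁻¹ ≤
      10 * 2 ^ m * M * ‖x - x'‖ *
        (greenMajorant m (1 - ‖x‖) ‖y - x‖ + greenMajorant m (1 - ‖x'‖) ‖y - x'‖) := by
  have hn := norm_nonneg x
  have hn' := norm_nonneg x'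
  have hny := norm_nonneg y
  have hA : 0 < 1 - ‖x‖ ^ 2 := by nlinarith
  have hA' : 0 < 1 - ‖x'‖ ^ 2 := by nlinarith
  have hB : 0 < 1 - ‖y‖ ^ 2 := by nlinarith
  have hAu : 1 - ‖x‖ ^ 2 ≤ 2 * (1 - ‖x‖) := by nlinarith
  have hAu' : 1 - ‖x'‖ ^ 2 ≤ 2 * (1 - ‖x'‖) := by nlinarith
  have hBu : 1 - ‖y‖ ^ 2 ≤ 2 * (1 - ‖y‖) := by nlinarith
  have hd : 0 < ‖x - y‖ := norm_pos_iff.2 (sub_ne_zero.2 hxy.symm)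
  have hd' : 0 < ‖x' - y‖ := norm_pos_iff.2 (sub_ne_zero.2 hxy'.symm)
  have e := qbracket_sq hx hy
  have e' := qbracket_sq hx' hy
  have hq := qbracket_pos hx hy
  have hq' := qbracket_pos hx' hy
  obtain ⟨b1, b2, b3⟩ := one_sub_norm_le_qbracket hx hy
  obtain ⟨b1', b2', b3'⟩ := one_sub_norm_le_qbracket hx' hy
  have hdd : |‖x - y‖ - ‖x' - y‖| ≤ ‖x - x'‖ := by
    refine (abs_norm_sub_norm_le _ _).trans (le_of_eq ?_)
    rw [sub_sub_sub_cancel_right]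
  obtain ⟨r1, r2⟩ := abs_ratio_sub_le hd hd' hq hq' hA'.le hB.le hA.le e e' hdd
    (abs_sq_sub_sq_le hx hx') (by linarith) (by linarith) (by linarith) (by linarith)
  have hG := abs_gfun_sub_le (m := m) (div_pos hd hq) ((div_le_one hq).2 b3) (div_pos hd' hq')
    ((div_le_one hq').2 b3')
  have t1 := greenTerm_le (m := m) hA.le hAu hB (by linarith) hd hM (norm_nonneg (x - x')) e b1 b3
    r1 hp hp0
  have t2 := greenTerm_le (m := m) hA'.le hAu' hB (by linarith) hd' hM (norm_nonneg (x - x')) e' b1'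
    b3' r2 hp hp0
  rw [Gh, Gh, norm_mobius hx hy, norm_mobius hx' hy]
  rw [norm_sub_rev y x, norm_sub_rev y x']
  set r := ‖x - y‖ / qbracket x y
  set r' := ‖x' - y‖ / qbracket x' y
  calc _ ≤ |r - r'| * ((1 - r ^ 2) ^ m / r ^ (m + 1) + (1 - r' ^ 2) ^ m / r' ^ (m + 1)) * p
        * ((1 - ‖y‖ ^ 2) ^ (m + 2))⁻¹ := by gcongr
    _ = |r - r'| * ((1 - r ^ 2) ^ m / r ^ (m + 1)) * p * ((1 - ‖y‖ ^ 2) ^ (m + 2))⁻¹ +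
        |r - r'| * ((1 - r' ^ 2) ^ m / r' ^ (m + 1)) * p * ((1 - ‖y‖ ^ 2) ^ (m + 2))⁻¹ := by ring
    _ ≤ _ := (add_le_add t1 t2).trans (le_of_eq (by ring))

/-! ### The Green integral -/

/-- No integrability is needed: if `f - g` is integrable, then `f` and `g` are integrable
together, and otherwise both Bochner integrals vanish. -/
theorem enorm_integral_sub_le {α E : Type*} [MeasurableSpace α] [NormedAddCommGroup E]
    [NormedSpace ℝ E] {μ : Measure α} {f g : α → E} (hf : AEStronglyMeasurable f μ)
    (hg : AEStronglyMeasurable g μ) :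
    ‖∫ a, f a ∂μ - ∫ a, g a ∂μ‖ₑ ≤ ∫⁻ a, ‖f a - g a‖ₑ ∂μ := by
  by_cases hfin : ∫⁻ a, ‖f a - g a‖ₑ ∂μ = ⊤
  · rw [hfin]
    exact le_top
  have hi : Integrable (fun a => f a - g a) μ := ⟨hf.sub hg, lt_top_iff_ne_top.2 hfin⟩
  by_cases hfi : Integrable f μ
  · have hgi : Integrable g μ := by
      have := hfi.sub hi
      refine this.congr (Filter.Eventually.of_forall fun a => ?_)
      simp
    rw [← integral_sub hfi hgi]
    exact enorm_integral_le_lintegral_enorm _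
  · have hgi : ¬ Integrable g μ := fun h => hfi <| by
      refine (hi.add h).congr (Filter.Eventually.of_forall fun a => ?_)
      simp
    rw [integral_undef hfi, integral_undef hgi, sub_zero, enorm_zero]
    exact zero_le

theorem greenMajorant_nonneg {m : ℕ} {ρ t : ℝ} (hρ : 0 ≤ ρ) (ht : 0 ≤ t) :
    0 ≤ greenMajorant m ρ t := by
  unfold greenMajorant
  have : 0 ≤ max ρ t := le_max_of_le_left hρ
  positivity

theorem measurable_greenMajorant (m : ℕ) (ρ : ℝ) : Measurable (greenMajorant m ρ) := by
  unfold greenMajorant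
  fun_prop

theorem lintegral_radial_greenMajorant {m : ℕ} (hm : 1 ≤ m) {ρ : ℝ} (hρ : 0 < ρ) :
    ∫⁻ r in Ioi (0 : ℝ), ENNReal.ofReal (r ^ (m + 1)) * ENNReal.ofReal (greenMajorant m ρ r)
      ≤ 2 := by
  have hs : Ioi (0 : ℝ) = Ioc 0 ρ ∪ Ioi ρ := (Ioc_union_Ioi_eq_Ioi hρ.le).symm
  have hk : ∀ r : ℝ, 0 < r → ENNReal.ofReal (r ^ (m + 1)) * ENNReal.ofReal (greenMajorant m ρ r)
      = ENNReal.ofReal (ρ ^ m * (max ρ r ^ (m + 1))⁻¹) := by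
    intro r hr
    rw [← ENNReal.ofReal_mul (by positivity), greenMajorant]
    congr 1
    field_simp
  rw [hs]
  refine (lintegral_union_le _ _ _).trans ?_
  rw [← one_add_one_eq_two]
  refine add_le_add ?_ ?_
  · calc _ = ∫⁻ r in Ioc 0 ρ, ENNReal.ofReal ρ⁻¹ := by
          refine setLIntegral_congr_fun measurableSet_Ioc fun r hr => ?_
          rw [hk r hr.1, max_eq_left hr.2, pow_succ]
          congr 1
          field_simp
      _ = 1 := by
          rw [setLIntegral_const, Real.volume_Ioc, sub_zero, ← ENNReal.ofReal_mul (by positivity),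
            inv_mul_cancel₀ hρ.ne', ENNReal.ofReal_one]
      _ ≤ 1 := le_rfl
  · calc _ = ∫⁻ r in Ioi ρ, ENNReal.ofReal (ρ ^ m) * ENNReal.ofReal ((r ^ (m + 1))⁻¹) := by
          refine setLIntegral_congr_fun measurableSet_Ioi fun r hr => ?_
          rw [hk r (hρ.trans hr), max_eq_right (le_of_lt hr), ENNReal.ofReal_mul (by positivity)]
      _ ≤ ENNReal.ofReal (ρ ^ m) * ENNReal.ofReal ((ρ ^ m)⁻¹) := by
          rw [lintegral_const_mul' _ _ ENNReal.ofReal_ne_top]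
          exact mul_le_mul_right (lintegral_tail hm hρ) _
      _ = 1 := by
          rw [← ENNReal.ofReal_mul (by positivity), mul_inv_cancel₀ (by positivity),
            ENNReal.ofReal_one]
      _ ≤ 1 := le_rfl

/-- The majorant is integrable uniformly in `ρ`: in polar coordinates, both the part `t ≤ ρ` and the
part `t > ρ` of its radial integral are at most one. -/
theorem lintegral_greenMajorant_le {m : ℕ} (hm : 1 ≤ m) {ρ : ℝ} (hρ : 0 < ρ) (x : En (m + 2)) :
    ∫⁻ y, ENNReal.ofReal (greenMajorant m ρ ‖y - x‖) ∂(nuMeasure (m + 2))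
      ≤ ENNReal.ofReal (2 * (m + 2)) := by
  have hmeas : Measurable fun y : En (m + 2) => ENNReal.ofReal (greenMajorant m ρ ‖y‖) :=
    ((measurable_greenMajorant m ρ).comp measurable_norm).ennreal_ofReal
  rw [nuMeasure, lintegral_smul_measure,
    lintegral_sub_right_eq_self (fun y => ENNReal.ofReal (greenMajorant m ρ ‖y‖)) x,
    lintegral_polar (by omega) hmeas]
  have hV0 : volume (ball (0 : En (m + 2)) 1) ≠ 0 := (measure_ball_pos _ _ one_pos).ne'
  have hVt : volume (ball (0 : En (m + 2)) 1) ≠ ⊤ := measure_ball_lt_top.ne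
  have h1 : (∫⁻ ξ : sphere (0 : En (m + 2)) 1, (∫⁻ r in Ioi (0 : ℝ),
      ENNReal.ofReal (r ^ (m + 2 - 1)) *
        ENNReal.ofReal (greenMajorant m ρ ‖r • (ξ : En (m + 2))‖))
        ∂((volume : Measure (En (m + 2))).toSphere))
      ≤ 2 * ((m + 2 : ℕ) * volume (ball (0 : En (m + 2)) 1)) := by
    have : ∀ ξ : sphere (0 : En (m + 2)) 1, (∫⁻ r in Ioi (0 : ℝ),
      ENNReal.ofReal (r ^ (m + 2 - 1)) *
        ENNReal.ofReal (greenMajorant m ρ ‖r • (ξ : En (m + 2))‖)) ≤ 2 := by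
      intro ξ
      refine le_trans (le_of_eq ?_) (lintegral_radial_greenMajorant hm hρ)
      refine setLIntegral_congr_fun measurableSet_Ioi fun r hr => ?_
      have hr : 0 < r := hr
      rw [norm_smul, Real.norm_eq_abs, abs_of_pos hr]
      simp
    refine (lintegral_mono this).trans ?_
    rw [lintegral_const, Measure.toSphere_apply_univ]
    simp
  refine (mul_le_mul_right h1 _).trans (le_of_eq ?_)
  rw [show (2 : ENNReal) * ((m + 2 : ℕ) * volume (ball (0 : En (m + 2)) 1)) =
    volume (ball (0 : En (m + 2)) 1) * (2 * (m + 2 : ℕ)) by ring, ← mul_assoc,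
    ENNReal.inv_mul_cancel hV0 hVt, one_mul, ENNReal.ofReal_mul (by norm_num)]
  congr 1
  · simp
  · rw [← ENNReal.ofReal_natCast]
    push_cast
    rfl

theorem nu_singleton {m : ℕ} (x : En (m + 2)) : nuMeasure (m + 2) {x} = 0 := by
  rw [nuMeasure, Measure.smul_apply, measure_singleton, smul_zero]

theorem tau_singleton {m : ℕ} (x : En (m + 2)) : tauMeasure (m + 2) {x} = 0 :=
  withDensity_absolutelyContinuous _ _ (nu_singleton x)

theorem aestronglyMeasurable_Gh_smul {m : ℕ} {x : En (m + 2)} (hx : ‖x‖ < 1)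
    {ψ : En (m + 2) → En (m + 2)} (hψ : ContinuousOn ψ (ball 0 1)) :
    AEStronglyMeasurable (fun y => Gh (m + 2) x y • ψ y)
      ((tauMeasure (m + 2)).restrict (ball 0 1)) := by
  rw [← Measure.restrict_congr_set (sdiff_null_ae_eq_self (tau_singleton x))]
  refine ContinuousOn.aestronglyMeasurable ?_ (measurableSet_ball.diff (measurableSet_singleton x))
  have h1 : ContinuousOn (fun y => gfun (m + 2) (‖x - y‖ / qbracket x y)) (ball 0 1 \ {x}) := by
    refine (continuousOn_gfun m).comp ?_ ?_
    · refine ContinuousOn.div (by fun_prop) ?_ fun y hy =>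
        (qbracket_pos hx (mem_ball_zero_iff.1 hy.1)).ne'
      unfold qbracket
      fun_prop
    · intro y hy
      have hy1 := mem_ball_zero_iff.1 hy.1
      have hq := qbracket_pos hx hy1
      have hne : x - y ≠ 0 := sub_ne_zero.2 (Ne.symm hy.2)
      exact ⟨div_pos (norm_pos_iff.2 hne) hq,
        (div_le_one hq).2 (one_sub_norm_le_qbracket hx hy1).2.2⟩
  refine ContinuousOn.smul (h1.congr fun y hy => ?_) (hψ.mono sdiff_subset)
  rw [Gh, norm_mobius hx (mem_ball_zero_iff.1 hy.1)]

/-- The local Lipschitz estimate for the Green integral. -/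
theorem GhInt_local {m : ℕ} (hm : 1 ≤ m) : ∃ C : ℝ, 0 ≤ C ∧ ∀ M : ℝ, 0 ≤ M →
    ∀ ψ : En (m + 2) → En (m + 2), ContinuousOn ψ (ball 0 1) →
    (∀ x ∈ ball (0 : En (m + 2)) 1, ‖ψ x‖ ≤ M * (1 - ‖x‖ ^ 2)) →
    ∀ x x' : En (m + 2), ‖x‖ < 1 → ‖x'‖ < 1 → ‖x - x'‖ ≤ (1 - ‖x‖) / 20 →
      ‖GhInt (m + 2) ψ x - GhInt (m + 2) ψ x'‖ ≤ C * M * ‖x - x'‖ := by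
  refine ⟨10 * 2 ^ m * (4 * (m + 2)), by positivity, ?_⟩
  intro M hM ψ hψc hψ x x' hx hx' hδ
  have hρ : 0 < 1 - ‖x‖ := by linarith
  have hρ' : 0 < 1 - ‖x'‖ := by linarith
  set c := 10 * 2 ^ m * M * ‖x - x'‖ with hc
  have hc0 : 0 ≤ c := by positivity
  refine norm_le_of_enorm_le (by positivity) ?_
  refine (enorm_integral_sub_le (aestronglyMeasurable_Gh_smul hx hψc)
    (aestronglyMeasurable_Gh_smul hx' hψc)).trans ?_
  rw [tauMeasure, setLIntegral_withDensity_eq_setLIntegral_mul_non_measurable _ (by fun_prop) _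
    measurableSet_ball (Filter.Eventually.of_forall fun _ => ENNReal.ofReal_lt_top)]
  have hae : ∀ z : En (m + 2), ∀ᵐ y ∂((nuMeasure (m + 2)).restrict (ball 0 1)), y ≠ z := by
    intro z
    refine ae_restrict_of_ae ?_
    rw [ae_iff]
    simpa using nu_singleton z
  have hpt : ∀ᵐ y ∂((nuMeasure (m + 2)).restrict (ball 0 1)),
      ((fun y : En (m + 2) => ENNReal.ofReal ((1 - ‖y‖ ^ 2) ^ (m + 2))⁻¹) *
        fun y => ‖Gh (m + 2) x y • ψ y - Gh (m + 2) x' y • ψ y‖ₑ) y ≤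
      ENNReal.ofReal c * (ENNReal.ofReal (greenMajorant m (1 - ‖x‖) ‖y - x‖) +
        ENNReal.ofReal (greenMajorant m (1 - ‖x'‖) ‖y - x'‖)) := by
    filter_upwards [hae x, hae x', ae_restrict_mem measurableSet_ball] with y h1 h2 h3
    have hy := mem_ball_zero_iff.1 h3
    have hB : 0 < 1 - ‖y‖ ^ 2 := by nlinarith [norm_nonneg y]
    rw [Pi.mul_apply, ← ofReal_norm, ← ENNReal.ofReal_mul (by positivity),
      ← ENNReal.ofReal_add (greenMajorant_nonneg hρ.le (norm_nonneg _))
        (greenMajorant_nonneg hρ'.le (norm_nonneg _)), ← ENNReal.ofReal_mul hc0]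
    apply ENNReal.ofReal_le_ofReal
    rw [← sub_smul, norm_smul, Real.norm_eq_abs, mul_comm]
    exact Gh_diff_le hx hx' hy h1 h2 hδ hM (norm_nonneg _) (hψ y h3)
  refine (lintegral_mono_ae hpt).trans ?_
  refine (setLIntegral_le_lintegral _ _).trans ?_
  have hmeas : Measurable fun y : En (m + 2) =>
      ENNReal.ofReal (greenMajorant m (1 - ‖x‖) ‖y - x‖) :=
    ((measurable_greenMajorant m _).comp (by fun_prop)).ennreal_ofReal
  rw [lintegral_const_mul' _ _ ENNReal.ofReal_ne_top, lintegral_add_left hmeas]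
  refine (mul_le_mul_right (add_le_add (lintegral_greenMajorant_le hm hρ x)
    (lintegral_greenMajorant_le hm hρ' x')) _).trans (le_of_eq ?_)
  rw [← ENNReal.ofReal_add (by positivity) (by positivity), ← ENNReal.ofReal_mul hc0]
  congr 1
  rw [hc]
  ring

/-! ### Bi-Lipschitz bounds -/

/-- bi-Lipschitz continuity of `u = P_h[φ] - G_h[ψ]`. -/
theorem stmt_1 (n : ℕ) (hn : 3 ≤ n) (L M : ℝ) (hL : 0 ≤ L) (hM : 0 ≤ M) :
    ∃ C₁ : ℝ, 0 ≤ C₁ ∧ ∀ u φ ψ : En n → En n,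
      ContDiffOn ℝ 2 u (ball (0 : En n) 1) →
      ContinuousOn u (closedBall (0 : En n) 1) →
      (∀ x ∈ ball (0 : En n) 1, u x = PhInt n φ x - GhInt n ψ x) →
      (∀ ξ ∈ sphere (0 : En n) 1, ∀ η ∈ sphere (0 : En n) 1,
        ‖φ ξ - φ η‖ ≤ L * ‖ξ - η‖) →
      ContinuousOn ψ (ball (0 : En n) 1) →
      (∀ x ∈ ball (0 : En n) 1, ‖ψ x‖ ≤ M * (1 - ‖x‖ ^ 2)) →
      ∀ x ∈ ball (0 : En n) 1, ∀ y ∈ ball (0 : En n) 1,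
        (sInf ((fun ζ : En n => ‖fderiv ℝ u 0 ζ‖) '' sphere (0 : En n) 1) - 2 * C₁)
            * ‖x - y‖ ≤ ‖u x - u y‖ ∧
          ‖u x - u y‖ ≤ C₁ * ‖x - y‖ := by
  obtain ⟨m, rfl⟩ : ∃ m, n = m + 2 := ⟨n - 2, by omega⟩
  have hm : 1 ≤ m := by omega
  obtain ⟨CP, hCP, hP⟩ := PhInt_local hm
  obtain ⟨CG, hCG, hG⟩ := GhInt_local hm
  have hC : 0 ≤ CP * L + CG * M := by positivity
  refine ⟨CP * L + CG * M, hC, ?_⟩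
  intro u φ ψ _ _ hu hφ hψc hψ
  have hup : ∀ x y : En (m + 2), ‖x‖ < 1 → ‖y‖ < 1 →
      ‖u x - u y‖ ≤ (CP * L + CG * M) * ‖x - y‖ := by
    intro x y hx hy
    refine lipschitz_of_local (f := u) (fun x y hx hy hxy => ?_) hx hy
    rw [hu x (mem_ball_zero_iff.2 hx), hu y (mem_ball_zero_iff.2 hy), sub_sub_sub_comm]
    refine (norm_sub_le _ _).trans ?_
    have h1 := hP L hL φ hφ x y hx hy hxy
    have h2 := hG M hM ψ hψc hψ x y hx hy hxy
    linarith
  -- Lipschitz continuity with constant `C₁` bounds `Du(0)`, which makes the lower bound trivial.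
  have hD : ‖fderiv ℝ u 0‖ ≤ CP * L + CG * M := by
    have hlip : LipschitzOnWith ⟨CP * L + CG * M, hC⟩ u (ball 0 1) :=
      LipschitzOnWith.of_dist_le_mul fun x hx y hy => by
        rw [dist_eq_norm, dist_eq_norm]
        exact hup x y (mem_ball_zero_iff.1 hx) (mem_ball_zero_iff.1 hy)
    exact norm_fderiv_le_of_lipschitzOn ℝ (ball_mem_nhds _ one_pos) hlip
  have hinf : sInf ((fun ζ : En (m + 2) => ‖fderiv ℝ u 0 ζ‖) '' sphere (0 : En (m + 2)) 1) ≤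
      CP * L + CG * M := by
    obtain ⟨ζ, hζ, -⟩ := exists_radial (n := m + 2) (by omega) 0
    refine (csInf_le ⟨0, ?_⟩ (mem_image_of_mem _ (mem_sphere_zero_iff_norm.2 hζ))).trans ?_
    · rintro _ ⟨η, -, rfl⟩
      exact norm_nonneg _
    · refine ((fderiv ℝ u 0).le_opNorm ζ).trans ?_
      rwa [hζ, mul_one]
  intro x hx y hy
  refine ⟨?_, hup x y (mem_ball_zero_iff.1 hx) (mem_ball_zero_iff.1 hy)⟩
  have hnp : sInf ((fun ζ : En (m + 2) => ‖fderiv ℝ u 0 ζ‖) '' sphere (0 : En (m + 2)) 1)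
      - 2 * (CP * L + CG * M) ≤ 0 := by linarith
  exact (mul_nonpos_of_nonpos_of_nonneg hnp (norm_nonneg _)).trans (norm_nonneg _)
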